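/- Let P be a finite pure weighted graded poset of rank d possessing Property UL with constants (c^xyz_j, c^dia_j, c^sqr_j), with c^dia_j > 0 for all j, and let α_0,…,α_{d−1} be real numbers with α_j ≤ 1. For i ≥ 0 let μ'_{i−1} be the maximum over x ∈ P(i−1) of the second largest eigenvalue of M^+_{x,0}. Set a_{l,r} = 1 − Π_{j=r}^{l} (1−α_j)/c^dia_j and b_{l,r} = (1/c^dia_r)·Π_{j=r+1}^{l} (1−α_j)/c^dia_j. Then for every 0 ≤ k ≤ d−1 and every f ∈ C^k with ⟨f,1⟩ = 0 there exist h_j ∈ C^j with ⟨h_j,1⟩ = 0, 0 ≤ j ≤ k, such that ‖f‖² = Σ_{j=0}^k ‖h_j‖² and ‖U_k f‖² ≤ Σ_{j=0}^k (a_{k,j} + Σ_{i=j}^k b_{k,i}·max{μ'_{i−1} − α_i, 0})·‖h_j‖². Consequently, ‖U_k f‖² ≤ (max_{j≤k} a_{k,j} + Σ_{i=0}^k b_{k,i}·max{μ'_{i−1} − α_i, 0})·‖f‖². -/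

import Mathlib

open Finset

attribute [local instance] Classical.propDecidable

noncomputable section

/-- A finite pure weighted graded poset of rank `d`, presented as a rank function
and a weight scheme on a finite partial order `P`. -/
structure WGP (P : Type) [Fintype P] [PartialOrder P] where
  /-- the rank of the poset -/
  d : ℤ
  /-- the rank function -/
  rk : P → ℤ
  rk_mono : Monotone rk
  rk_lb : ∀ x, -1 ≤ rk x
  rk_ub : ∀ x, rk x ≤ d
  rk_covBy : ∀ a b : P, a ⋖ b → rk b = rk a + 1
  bot_unique : ∃! x : P, rk x = -1
  isPure : ∀ x : P, ∃ y : P, rk y = d ∧ x ≤ y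
  /-- the weight function -/
  m : P → ℝ
  m_pos : ∀ x, 0 < m x
  /-- the transition probabilities: `p y x` is `p_{y → x}` -/
  p : P → P → ℝ
  p_nonneg : ∀ y x, 0 ≤ p y x
  p_pos_iff : ∀ y x, 0 < p y x ↔ x ⋖ y
  p_sum : ∀ y, 0 ≤ rk y → ∑ x ∈ univ.filter (fun x => x ⋖ y), p y x = 1
  m_eq : ∀ x, rk x < d → m x = ∑ y ∈ univ.filter (fun y => x ⋖ y), p y x * m y
  m_bot : ∀ x, rk x = -1 → m x = 1

/-- `T` has at most `n` eigenvalues greater than `c`, counted with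
(geometric) multiplicity. -/
def eigMultAboveLe {V : Type*} [AddCommGroup V] [Module ℝ V]
    (T : Module.End ℝ V) (c : ℝ) (n : ℕ) : Prop :=
  ∀ s : Finset ℝ, (∀ μ ∈ s, c < μ) →
    ∑ μ ∈ s, Module.finrank ℝ (T.eigenspace μ) ≤ n

/-- `μ` is the second largest eigenvalue of `T`, counted with multiplicity. -/
def IsSecondLargestEig {V : Type*} [AddCommGroup V] [Module ℝ V]
    (T : Module.End ℝ V) (μ : ℝ) : Prop :=
  T.HasEigenvalue μ ∧ eigMultAboveLe T μ 1 ∧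
    ∃ s : Finset ℝ, (∀ ν ∈ s, μ ≤ ν) ∧
      2 ≤ ∑ ν ∈ s, Module.finrank ℝ (T.eigenspace ν)

/-- `ν` is the least eigenvalue of `T`. -/
def IsLeastEig {V : Type*} [AddCommGroup V] [Module ℝ V]
    (T : Module.End ℝ V) (ν : ℝ) : Prop :=
  T.HasEigenvalue ν ∧ ∀ c : ℝ, T.HasEigenvalue c → ν ≤ c

/-- `λ(T) ≤ lam`, i.e. the second largest eigenvalue of `T` (with multiplicity)
is at most `lam` and the least eigenvalue is at least `-lam`. -/
def lamBd {V : Type*} [AddCommGroup V] [Module ℝ V]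
    (T : Module.End ℝ V) (lam : ℝ) : Prop :=
  eigMultAboveLe T lam 1 ∧ ∀ c : ℝ, T.HasEigenvalue c → -lam ≤ c

namespace WGP

variable {P : Type} [Fintype P] [PartialOrder P] (W : WGP P)

/-- The level set `P(i)`. -/
def lvl (i : ℤ) : Finset P := univ.filter (fun x => W.rk x = i)

/-- The weighted inner product on `C^i`. -/
def innerAt (i : ℤ) (f g : P → ℝ) : ℝ := ∑ x ∈ W.lvl i, W.m x * f x * g x

/-- The squared norm on `C^i`. -/
def normSqAt (i : ℤ) (f : P → ℝ) : ℝ := W.innerAt i f f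

/-- The norm on `C^i`. -/
def normAt (i : ℤ) (f : P → ℝ) : ℝ := Real.sqrt (W.normSqAt i f)

/-- The matrix of transition probabilities : entry `(y, x)` is `p_{y→x}`,
which vanishes unless `x ⋖ y`.  This is also the matrix of the up operator. -/
def upMat : Matrix P P ℝ := Matrix.of fun y x => W.p y x

/-- The matrix of the down operator. -/
def downMat : Matrix P P ℝ := Matrix.of fun x y => W.p y x * W.m y / W.m x

/-- The up operator `U`. -/
def Up (f : P → ℝ) : P → ℝ := W.upMat.mulVec f

/-- The down operator `D`. -/
def Down (f : P → ℝ) : P → ℝ := W.downMat.mulVec f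

/-- `chSum x y = Σ_{c ∈ Ch(y→x)} p(c)`, the total `p`-weight of maximal chains
from `x` up to `y` (the entry of the corresponding power of the transition
matrix). -/
def chSum (x y : P) : ℝ := (W.upMat ^ (W.rk y - W.rk x).toNat) y x

/-- The induced weight function of the link `P_x`. -/
def mL (x y : P) : ℝ := W.m y / W.m x * W.chSum x y

/-- The induced transition probabilities of the link `P_x` :
`pL x z y = (p_x)_{z → y}`. -/
def pL (x z y : P) : ℝ := W.p z y * W.chSum x y / W.chSum x z

/-- The level set `P_x(j)` of the link of `x`. -/
def linkLvl (x : P) (j : ℤ) : Finset P :=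
  univ.filter (fun y => x ≤ y ∧ W.rk y = W.rk x + 1 + j)

/-- The inner product of the link `P_x` at link-level `j`. -/
def innerL (x : P) (j : ℤ) (f g : P → ℝ) : ℝ :=
  ∑ y ∈ W.linkLvl x j, W.mL x y * f y * g y

/-- The matrix of the up operator of the link `P_x`. -/
def upMatL (x : P) : Matrix P P ℝ :=
  Matrix.of fun z y => if y ⋖ z ∧ x ≤ y then W.pL x z y else 0

/-- The matrix of the down operator of the link `P_x`. -/
def downMatL (x : P) : Matrix P P ℝ :=
  Matrix.of fun y z => if y ⋖ z then W.pL x z y * W.mL x z / W.mL x y else 0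

/-- The up operator of the link `P_x`. -/
def UpL (x : P) (f : P → ℝ) : P → ℝ := (W.upMatL x).mulVec f

/-- The down operator of the link `P_x`. -/
def DownL (x : P) (f : P → ℝ) : P → ℝ := (W.downMatL x).mulVec f

/-- The up-down walk `M^+_{x,0}` of the link `P_x`. -/
def MplusL (x : P) (f : P → ℝ) : P → ℝ := W.DownL x (W.UpL x f)

/-- The down-up walk `M^-_{x,0}` of the link `P_x`. -/
def MminusL (x : P) (f : P → ℝ) : P → ℝ := W.UpL x (W.DownL x f)

/-- The adjacency matrix. -/
def adjMat : Matrix P P ℝ := Matrix.of fun y x =>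
  if x = y then 0 else
    ∑ z ∈ univ.filter (fun z => x ⋖ z ∧ y ⋖ z),
      W.m z * W.p z x * W.p z y / ((1 - W.p z y) * W.m y)

/-- The adjacency operator. -/
def Adj (f : P → ℝ) : P → ℝ := W.adjMat.mulVec f

/-- The adjacency matrix of the link `P_x`. -/
def adjMatL (x : P) : Matrix P P ℝ := Matrix.of fun y w =>
  if w = y then 0 else
    ∑ z ∈ univ.filter (fun z => w ⋖ z ∧ y ⋖ z),
      W.mL x z * W.pL x z w * W.pL x z y / ((1 - W.pL x z y) * W.mL x y)

/-- The adjacency operator of the link `P_x`. -/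
def AdjL (x : P) (f : P → ℝ) : P → ℝ := (W.adjMatL x).mulVec f

/-- The up-down walk `M^+_l` as an endomorphism of `C^l`. -/
def MplusEnd (l : ℤ) : Module.End ℝ ({x : P // W.rk x = l} → ℝ) :=
  ((W.downMat * W.upMat).submatrix Subtype.val Subtype.val).mulVecLin

/-- The up-down walk `M^+_{x,0}` as an endomorphism of `C^0(P_x)`. -/
def MplusEndL (x : P) : Module.End ℝ ({y : P // x ⋖ y} → ℝ) :=
  ((W.downMatL x * W.upMatL x).submatrix Subtype.val Subtype.val).mulVecLin

/-- The adjacency operator `A_x` of the link `P_x` as an endomorphism of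
`C^0(P_x)`. -/
def AdjEndL (x : P) : Module.End ℝ ({y : P // x ⋖ y} → ℝ) :=
  ((W.adjMatL x).submatrix Subtype.val Subtype.val).mulVecLin

/-- A standard weight scheme. -/
def Standard : Prop :=
  ∀ y x : P, x ⋖ y → W.p y x = 1 / ((univ.filter (fun z => z ⋖ y)).card : ℝ)

/-- `P` is lower regular at level `i` with constant `N`. -/
def LowerRegAt (i : ℤ) (N : ℕ) : Prop :=
  ∀ y : P, W.rk y = i → (univ.filter (fun z => z ⋖ y)).card = N

/-- `P` is middle regular at level `i` with constant `N`. -/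
def MiddleRegAt (i : ℤ) (N : ℕ) : Prop :=
  ∀ x z : P, W.rk x = i + 1 → W.rk z = i - 1 → z < x →
    (univ.filter (fun y => z ⋖ y ∧ y ⋖ x)).card = N

/-- `P` is `∨∧`-regular at level `i` with constant `N`. -/
def WedgeRegAt (i : ℤ) (N : ℕ) : Prop :=
  ∀ y₁ y₂ : P, W.rk y₁ = i → W.rk y₂ = i → y₁ ≠ y₂ → (∃ z, y₁ ⋖ z ∧ y₂ ⋖ z) →
    (univ.filter (fun s => s ⋖ y₁ ∧ s ⋖ y₂)).card = N

/-- `P` is `⅄`-regular with constant `R`. -/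
def WyeReg (R : ℕ) : Prop :=
  ∀ u y₁ y₂ : P, W.rk u = 2 → W.rk y₁ = 0 → W.rk y₂ = 0 → y₁ ≠ y₂ →
    y₁ < u → y₂ < u →
    (univ.filter (fun z => y₁ ⋖ z ∧ y₂ ⋖ z ∧ z ⋖ u)).card = R

/-- Property UL.1 with constants `c`. -/
def UL1 (c : ℤ → ℝ) : Prop :=
  ∀ l : ℤ, 0 ≤ l → l < W.d → ∀ y : P, W.rk y = l → ∀ x : P, y ⋖ x →
    ∑ z ∈ univ.filter (fun z => z ⋖ y), W.p y z ^ 2 / W.chSum z x = c l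

/-- Property UL.2 with constants `c`. -/
def UL2 (c : ℤ → ℝ) : Prop :=
  ∀ l : ℤ, 0 ≤ l → l < W.d → ∀ y₁ y₂ : P, W.rk y₁ = l → W.rk y₂ = l → y₁ ≠ y₂ →
    ∀ x : P, y₁ ⋖ x → y₂ ⋖ x →
    ∑ z ∈ univ.filter (fun z => z ⋖ y₁ ∧ z ⋖ y₂),
      W.p y₁ z * W.p y₂ z / W.chSum z x = c l

/-- Property UL.3 with constants `c`. -/
def UL3 (c : ℤ → ℝ) : Prop :=
  ∀ l : ℤ, 0 ≤ l → l < W.d → ∀ y : P, W.rk y = l →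
    ∑ x ∈ univ.filter (fun x => y ⋖ x), W.m x * W.p x y ^ 2 = c l * W.m y

/-- Property AL. -/
def AL : Prop :=
  ∀ l : ℤ, 0 ≤ l → l ≤ W.d - 1 → ∀ x y : P, W.rk x = l → W.rk y = l → x ≠ y →
    ∑ z ∈ univ.filter (fun z => x ⋖ z ∧ y ⋖ z),
        W.m z * W.p z x * W.p z y / (1 - W.p z x)
    = ∑ z ∈ univ.filter (fun z => x ⋖ z ∧ y ⋖ z),
        W.m z * W.p z x * W.p z y *
          ∑ s ∈ univ.filter (fun s => s ⋖ x ∧ s ⋖ y),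
            W.p x s * W.p y s / (W.chSum s z - W.p z x * W.p x s)

/-- Equation TL.1 with constant `c`. -/
def TL1 (c : ℝ) : Prop :=
  ∀ y : P, W.rk y = 0 →
    c * W.m y = ∑ z ∈ univ.filter (fun z => y ⋖ z), W.m z * W.p z y ^ 2 *
      ∑ x ∈ univ.filter (fun x => x ⋖ z ∧ x ≠ y), W.p z x / (1 - W.p z x) ^ 2

/-- Equation TL.2 with constant `c`. -/
def TL2 (c : ℝ) : Prop :=
  ∀ y₁ y₂ : P, W.rk y₁ = 0 → W.rk y₂ = 0 → y₁ ≠ y₂ →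
    c * ∑ z ∈ univ.filter (fun z => y₁ ⋖ z ∧ y₂ ⋖ z),
          W.m z * W.p z y₁ * W.p z y₂ / (1 - W.p z y₁)
    = ∑ z ∈ univ.filter (fun z => y₁ ⋖ z ∧ y₂ ⋖ z),
        W.m z * W.p z y₁ * W.p z y₂ *
          ∑ x ∈ univ.filter (fun x => x ⋖ z ∧ x ≠ y₁ ∧ x ≠ y₂),
            W.p z x / (1 - W.p z x) ^ 2

/-- Equation TL.3 with constant `c`. -/
def TL3 (c : ℝ) : Prop :=
  ∀ y : P, W.rk y = 0 →
    c * W.m y =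
      ∑ x ∈ univ.filter (fun x => W.rk x = 0 ∧ x ≠ y),
        ∑ z ∈ univ.filter (fun z => x ⋖ z ∧ y ⋖ z),
          ∑ w ∈ univ.filter (fun w => w ≠ z ∧ x ⋖ w ∧ y ⋖ w),
            ∑ u ∈ univ.filter (fun u => z ⋖ u ∧ w ⋖ u),
              W.m u * W.p u z * W.p u w * W.p w y * W.p z y * W.p w x * W.p z x /
                (W.chSum x u * (1 - W.p u z * W.p z x / W.chSum x u) *
                  (1 - W.p w x) * (1 - W.p z x))

/-- Equation TL.4 with constant `c`. -/
def TL4 (c : ℝ) : Prop :=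
  ∀ y₁ y₂ : P, W.rk y₁ = 0 → W.rk y₂ = 0 → y₁ ≠ y₂ →
    c * ∑ z ∈ univ.filter (fun z => y₁ ⋖ z ∧ y₂ ⋖ z),
          W.m z * W.p z y₁ * W.p z y₂ / (1 - W.p z y₁)
    = ∑ x ∈ univ.filter (fun x => W.rk x = 0 ∧ x ≠ y₁ ∧ x ≠ y₂),
        ∑ z ∈ univ.filter (fun z => x ⋖ z ∧ y₂ ⋖ z),
          ∑ w ∈ univ.filter (fun w => w ≠ z ∧ x ⋖ w ∧ y₁ ⋖ w),
            ∑ u ∈ univ.filter (fun u => z ⋖ u ∧ w ⋖ u),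
              W.m u * W.p u z * W.p u w * W.p w y₁ * W.p z y₂ * W.p w x * W.p z x /
                (W.chSum x u * (1 - W.p u z * W.p z x / W.chSum x u) *
                  (1 - W.p w x) * (1 - W.p z x))

/-- The induced function `f̂_x ∈ C^0(P_x)` of `f ∈ C^0`. -/
def hatF (x : P) (f : P → ℝ) : P → ℝ := fun z =>
  (1 / (1 - W.p z x)) * ∑ y ∈ univ.filter (fun y => y ≠ x ∧ y ⋖ z), W.p z y * f y

/-- `P` is connected: the Markov chain `M^+_0` on `P(0)` is irreducible. -/
def Connected : Prop :=
  ∀ y z : P, W.rk y = 0 → W.rk z = 0 →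
    ∃ j : ℕ, 0 < j ∧ ((W.downMat * W.upMat) ^ j) z y ≠ 0

/-- The link `P_x` is connected: the Markov chain `M^+_{x,0}` on `P_x(0)` is
irreducible. -/
def LinkConnected (x : P) : Prop :=
  ∀ y z : P, x ⋖ y → x ⋖ z →
    ∃ j : ℕ, 0 < j ∧ ((W.downMatL x * W.upMatL x) ^ j) z y ≠ 0

/-- `c` is a nontrivial eigenvalue of the adjacency operator `A` of `P`,
i.e. one with an eigenvector orthogonal to the constants. -/
def IsNontrivEigAdj (c : ℝ) : Prop :=
  ∃ f : P → ℝ, (∃ y, W.rk y = 0 ∧ f y ≠ 0) ∧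
    (∀ y, W.rk y = 0 → W.Adj f y = c * f y) ∧
    W.innerAt 0 f (fun _ => 1) = 0

/-- `c` is a nontrivial eigenvalue of the adjacency operator `A_x` of the
link `P_x`. -/
def IsNontrivEigAdjL (x : P) (c : ℝ) : Prop :=
  ∃ f : P → ℝ, (∃ y, x ⋖ y ∧ f y ≠ 0) ∧
    (∀ y, x ⋖ y → W.AdjL x f y = c * f y) ∧
    W.innerL x 0 f (fun _ => 1) = 0

end WGP

/-!
A Garland-type local-to-global argument. Property UL makes the local forms
`⟨U_z f, U_z f⟩` of the links, summed over `z ∈ P(l-1)` with weight `m z`, add up to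
`c^dia_l * ‖U f‖² + (1 - c^dia_l) * ‖f‖²`. Each link walk `M⁺_{z,0}` is a reversible Markov chain,
so apart from the mean `D f z` its form is bounded by its second eigenvalue; summing up,
`c^dia_l * ‖U f‖² + (1 - c^dia_l) * ‖f‖² ≤ ‖D f‖² + μ'_{l-1} * (‖f‖² - ‖D f‖²)`. By Cauchy–Schwarz
`‖D f‖² ≤ ‖U g‖²` for the multiple `g` of `D f` with `‖g‖ = ‖f‖`, which is again orthogonal to `1`,
so the estimate can be iterated downwards. The iteration ends at the first level `j` at which `D`
kills the function reached (at the latest at level `0`); this function serves as `h_j`, and the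
remaining `h_i` can be taken to be `0`.
-/

open scoped RealInnerProductSpace

section SpectralBounds

open Module.End

theorem eigMultAboveLe.mono {V : Type*} [AddCommGroup V] [Module ℝ V] {T : Module.End ℝ V}
    {c c' : ℝ} {n : ℕ} (h : eigMultAboveLe T c n) (hc : c ≤ c') : eigMultAboveLe T c' n :=
  fun s hs => h s fun μ hμ => hc.trans_lt (hs μ hμ)

theorem eigMultAboveLe.not_linearIndependent {V : Type*} [AddCommGroup V] [Module ℝ V]
    [FiniteDimensional ℝ V] {T : Module.End ℝ V} {c a b : ℝ} {u v : V}
    (h : eigMultAboveLe T c 1) (hu : T.HasEigenvector a u) (hv : T.HasEigenvector b v)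
    (ha : c < a) (hb : c < b) : ¬ LinearIndependent ℝ ![u, v] := by
  intro huv
  by_cases hab : a = b
  · subst hab
    have hspan : Submodule.span ℝ (Set.range ![u, v]) ≤ T.eigenspace a := by
      rw [Submodule.span_le, Matrix.range_cons_cons_empty, Set.pair_subset_iff]
      exact ⟨hu.1, hv.1⟩
    have htwo : 2 ≤ Module.finrank ℝ (T.eigenspace a) := by
      simpa [finrank_span_eq_card huv] using Submodule.finrank_mono hspan
    have hone := h {a} (by simpa using ha)
    rw [sum_singleton] at hone
    omega
  · have hpos {ν : ℝ} {w : V} (hw : T.HasEigenvector ν w) :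
        0 < Module.finrank ℝ (T.eigenspace ν) :=
      Submodule.one_le_finrank_iff.2 (hasEigenvalue_of_hasEigenvector hw)
    have hone := h {a, b} (by simp [ha, hb])
    rw [sum_pair hab] at hone
    have := hpos hu
    have := hpos hv
    omega

variable {E : Type*} [NormedAddCommGroup E] [InnerProductSpace ℝ E] [FiniteDimensional ℝ E]
  {T : E →ₗ[ℝ] E} {c μ : ℝ} {u : E}

theorem inner_apply_self_le_of_forall_hasEigenvalue_le (hT : T.IsSymmetric)
    (h : ∀ ν, HasEigenvalue T ν → ν ≤ μ) (x : E) : ⟪T x, x⟫ ≤ μ * ⟪x, x⟫ := by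
  set b := hT.eigenvectorBasis rfl
  rw [← b.sum_inner_mul_inner (T x) x, real_inner_self_eq_norm_sq, ← b.sum_sq_inner_right x,
    mul_sum]
  refine sum_le_sum fun i _ => ?_
  have hcoord : ⟪T x, b i⟫ = hT.eigenvalues rfl i * ⟪b i, x⟫ := by
    rw [hT, hT.apply_eigenvectorBasis rfl i, inner_smul_right, real_inner_comm]
    rfl
  rw [hcoord, mul_assoc, ← sq]
  exact mul_le_mul_of_nonneg_right (h _ (hT.hasEigenvalue_eigenvalues rfl i)) (sq_nonneg _)

theorem inner_apply_self_le_of_inner_eq_zero (hT : T.IsSymmetric) (hu : HasEigenvector T c u)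
    (hc : ∀ ν, HasEigenvalue T ν → ν ≤ c) (hμ : eigMultAboveLe T μ 1) {y : E}
    (hy : ⟪u, y⟫ = 0) : ⟪T y, y⟫ ≤ μ * ⟪y, y⟫ := by
  have hinv : ∀ x ∈ (ℝ ∙ u)ᗮ, T x ∈ (ℝ ∙ u)ᗮ := fun x hx => by
    rw [Submodule.mem_orthogonal_singleton_iff_inner_right] at hx ⊢
    rw [← hT, hu.apply_eq_smul, inner_smul_left, hx, mul_zero]
  have hle : ∀ ν, HasEigenvalue (T.restrict hinv) ν → ν ≤ μ := by
    intro ν hν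
    obtain ⟨v, hv⟩ := hν.exists_hasEigenvector
    have hv' : HasEigenvector T ν v :=
      ⟨mem_eigenspace_iff.2 (by simpa using congrArg Subtype.val hv.apply_eq_smul),
        by simpa using hv.2⟩
    have hνc : ν ≤ c := hc ν (hasEigenvalue_of_hasEigenvector hv')
    by_contra! hlt
    refine hμ.not_linearIndependent hu hv' (hlt.trans_le hνc) hlt ?_
    refine linearIndependent_of_ne_zero_of_inner_eq_zero (𝕜 := ℝ) ?_ ?_
    · simpa [Fin.forall_fin_two] using ⟨hu.2, hv.2⟩
    · have huv : ⟪u, (v : E)⟫ = 0 := Submodule.mem_orthogonal_singleton_iff_inner_right.1 v.2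
      intro i j hij
      fin_cases i <;> fin_cases j <;> simp_all [real_inner_comm]
  exact inner_apply_self_le_of_forall_hasEigenvalue_le (hT.restrict_invariant hinv) hle
    ⟨y, Submodule.mem_orthogonal_singleton_iff_inner_right.2 hy⟩

theorem inner_apply_self_le_of_eigMultAboveLe (hT : T.IsSymmetric) (hTu : T u = c • u)
    (hu : ⟪u, u⟫ = 1) (hc : ∀ ν, HasEigenvalue T ν → ν ≤ c) (hμ : eigMultAboveLe T μ 1) (x : E) :
    ⟪T x, x⟫ ≤ c * ⟪u, x⟫ ^ 2 + μ * (⟪x, x⟫ - ⟪u, x⟫ ^ 2) := by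
  set s := ⟪u, x⟫ with hs
  set y := x - s • u with hy
  have huy : ⟪u, y⟫ = 0 := by
    rw [hy, inner_sub_right, inner_smul_right, hu, ← hs, mul_one, sub_self]
  have hTyu : ⟪T y, u⟫ = 0 := by
    rw [hT, hTu, inner_smul_right, real_inner_comm, huy, mul_zero]
  have hx : x = s • u + y := by rw [hy, add_sub_cancel]
  have hself : ⟪x, x⟫ = s ^ 2 + ⟪y, y⟫ := by
    rw [hx, inner_add_add_self, real_inner_smul_left, real_inner_smul_left, real_inner_smul_right,
      real_inner_smul_right, real_inner_comm u y, huy, hu]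
    ring
  have hform : ⟪T x, x⟫ = c * s ^ 2 + ⟪T y, y⟫ := by
    rw [hx, map_add, map_smul, hTu]
    simp only [inner_add_left, inner_add_right, inner_smul_left, inner_smul_right, hu, huy, hTyu,
      RCLike.conj_to_real]
    ring
  have hu' : HasEigenvector T c u := ⟨mem_eigenspace_iff.2 hTu, by rintro rfl; simp at hu⟩
  rw [hform, hself, add_sub_cancel_left]
  gcongr
  exact inner_apply_self_le_of_inner_eq_zero hT hu' hc hμ huy

end SpectralBounds

section ReversibleChains

variable {ι : Type*} [Fintype ι]

/-- The inner product `⟨f, g⟩ = ∑ i, w i * f i * g i` of functions on a finite set with positive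
weights `w`, the setting in which reversible Markov chains are self-adjoint. -/
abbrev weightedInnerCore (w : ι → ℝ) (hw : ∀ i, 0 < w i) :
    InnerProductSpace.Core ℝ (ι → ℝ) where
  inner f g := ∑ i, w i * f i * g i
  conj_inner_symm f g := by
    simp only [conj_trivial]
    exact sum_congr rfl fun i _ => by ring
  re_inner_nonneg f := sum_nonneg fun i _ => by
    rw [mul_assoc]
    exact mul_nonneg (hw i).le (mul_self_nonneg _)
  add_left f g h := by
    simp only [Pi.add_apply, mul_add, add_mul, sum_add_distrib]
  smul_left f g r := by
    simp only [Pi.smul_apply, smul_eq_mul, conj_trivial, mul_sum]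
    exact sum_congr rfl fun i _ => by ring
  definite f hf := by
    have hnonneg : ∀ i ∈ univ, 0 ≤ w i * f i * f i := fun i _ => by
      rw [mul_assoc]
      exact mul_nonneg (hw i).le (mul_self_nonneg _)
    funext i
    have hzero : w i * f i * f i = 0 := (sum_eq_zero_iff_of_nonneg hnonneg).1 hf i (mem_univ i)
    simpa [(hw i).ne'] using hzero

variable [DecidableEq ι] {M : Matrix ι ι ℝ}

theorem eigenvalue_le_one_of_mem_rowStochastic (hM : M ∈ Matrix.rowStochastic ℝ ι) {ν : ℝ}
    (hν : Module.End.HasEigenvalue M.mulVecLin ν) : ν ≤ 1 := by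
  obtain ⟨i, hi⟩ := eigenvalue_mem_ball (A := M) (μ := ν) (by rwa [Matrix.toLin'_apply'])
  have hoff : ∑ j ∈ univ.erase i, ‖M i j‖ = 1 - M i i := by
    simp only [Real.norm_of_nonneg (Matrix.nonneg_of_mem_rowStochastic hM)]
    rw [← Matrix.sum_row_of_mem_rowStochastic hM i, ← add_sum_erase _ _ (mem_univ i),
      add_sub_cancel_left]
  rw [hoff, Metric.mem_closedBall, Real.dist_eq] at hi
  linarith [le_abs_self (ν - M i i)]

theorem sum_mul_mulVec_le_of_reversible (hM : M ∈ Matrix.rowStochastic ℝ ι) {w : ι → ℝ}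
    (hw : ∀ i, 0 < w i) (hw_sum : ∑ i, w i = 1) (hbal : ∀ i j, w i * M i j = w j * M j i)
    {μ : ℝ} (hμ : eigMultAboveLe M.mulVecLin μ 1) (f : ι → ℝ) :
    ∑ i, w i * M.mulVec f i * f i ≤
      (∑ i, w i * f i) ^ 2 + μ * (∑ i, w i * f i ^ 2 - (∑ i, w i * f i) ^ 2) := by
  let core := weightedInnerCore w hw
  let _ : NormedAddCommGroup (ι → ℝ) := core.toNormedAddCommGroup
  let _ : SeminormedAddCommGroup (ι → ℝ) := NormedAddCommGroup.toSeminormedAddCommGroup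
  let _ : InnerProductSpace ℝ (ι → ℝ) := .ofCore core.toCore
  have hinner : ∀ g h : ι → ℝ, ⟪g, h⟫ = ∑ i, w i * g i * h i := fun _ _ => rfl
  have hsymm : LinearMap.IsSymmetric M.mulVecLin := by
    intro g h
    simp only [hinner, Matrix.mulVecLin_apply, Matrix.mulVec, dotProduct, mul_sum, sum_mul]
    rw [sum_comm]
    refine sum_congr rfl fun i _ => sum_congr rfl fun j _ => ?_
    linear_combination (g i * h j) * hbal j i
  have hfix : M.mulVecLin 1 = (1 : ℝ) • 1 := by rw [one_smul, Matrix.mulVecLin_apply, hM.2]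
  have hunit : ⟪(1 : ι → ℝ), 1⟫ = 1 := (hinner 1 1).trans (by simpa using hw_sum)
  have key := inner_apply_self_le_of_eigMultAboveLe hsymm hfix hunit
    (fun _ => eigenvalue_le_one_of_mem_rowStochastic hM) hμ f
  simpa only [hinner, Matrix.mulVecLin_apply, Pi.one_apply, mul_one, one_mul, mul_assoc,
    ← sq (f _)] using key

end ReversibleChains

namespace WGP

variable {P : Type} [Fintype P] [PartialOrder P] (W : WGP P)

section UpDown

theorem p_eq_zero {x y : P} (h : ¬ x ⋖ y) : W.p y x = 0 :=
  le_antisymm (not_lt.1 (mt (W.p_pos_iff y x).1 h)) (W.p_nonneg y x)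

theorem covBy_of_p_ne_zero {x y : P} (h : W.p y x ≠ 0) : x ⋖ y :=
  not_imp_comm.1 W.p_eq_zero h

theorem downMat_eq_zero {x y : P} (h : ¬ x ⋖ y) : W.downMat x y = 0 := by
  rw [downMat, Matrix.of_apply, W.p_eq_zero h, zero_mul, zero_div]

theorem Up_apply (f : P → ℝ) (y : P) : W.Up f y = ∑ x, W.p y x * f x := rfl

theorem Down_apply (f : P → ℝ) (x : P) : W.Down f x = ∑ y, W.p y x * W.m y / W.m x * f y := rfl

theorem Down_congr {f g : P → ℝ} {x : P} (h : ∀ y, x ⋖ y → f y = g y) :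
    W.Down f x = W.Down g x := by
  refine sum_congr rfl fun y _ => ?_
  by_cases hxy : x ⋖ y
  · rw [h y hxy]
  · simp only [W.downMat_eq_zero hxy, zero_mul]

theorem Up_smul (c : ℝ) (f : P → ℝ) : W.Up (c • f) = c • W.Up f :=
  Matrix.mulVec_smul _ c f

theorem Up_one {y : P} (hy : 0 ≤ W.rk y) : W.Up 1 y = 1 := by
  rw [← W.p_sum y hy, sum_filter_of_ne fun _ _ => W.covBy_of_p_ne_zero]
  simp only [Up_apply, Pi.one_apply, mul_one]

theorem Down_one {x : P} (hx : W.rk x < W.d) : W.Down 1 x = 1 := by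
  simp only [Down_apply, Pi.one_apply, mul_one]
  rw [← sum_div, div_eq_one_iff_eq (W.m_pos x).ne', W.m_eq x hx,
    sum_filter_of_ne fun _ _ h => W.covBy_of_p_ne_zero (left_ne_zero_of_mul h)]

theorem mem_lvl {i : ℤ} {x : P} : x ∈ W.lvl i ↔ W.rk x = i := by
  simp only [lvl, mem_filter_univ]

theorem sum_lvl_sum_comm (i n : ℤ) {F : P → P → ℝ}
    (hF : ∀ z x, F z x ≠ 0 → W.rk x = W.rk z + n) :
    ∑ z ∈ W.lvl i, ∑ x, F z x = ∑ x ∈ W.lvl (i + n), ∑ z, F z x := by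
  rw [sum_comm, lvl, lvl, sum_filter]
  refine sum_congr rfl fun x _ => ?_
  split_ifs with hx
  · exact sum_filter_of_ne fun z _ hz => by have := hF z x hz; omega
  · refine sum_eq_zero fun z hz => not_ne_iff.1 fun h => hx ?_
    rw [hF z x h, (mem_filter.1 hz).2]

theorem innerAt_comm (l : ℤ) (f g : P → ℝ) : W.innerAt l f g = W.innerAt l g f :=
  sum_congr rfl fun _ _ => by ring

theorem innerAt_smul_left (l : ℤ) (c : ℝ) (f g : P → ℝ) :
    W.innerAt l (c • f) g = c * W.innerAt l f g := by
  simp only [innerAt, Pi.smul_apply, smul_eq_mul, mul_sum]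
  exact sum_congr rfl fun _ _ => by ring

theorem normSqAt_smul (l : ℤ) (c : ℝ) (f : P → ℝ) :
    W.normSqAt l (c • f) = c ^ 2 * W.normSqAt l f := by
  rw [normSqAt, innerAt_smul_left, innerAt_comm, innerAt_smul_left, ← mul_assoc, ← sq, normSqAt]

theorem normSqAt_eq_sum (l : ℤ) (f : P → ℝ) : W.normSqAt l f = ∑ x ∈ W.lvl l, W.m x * f x ^ 2 :=
  sum_congr rfl fun _ _ => by ring

theorem normSqAt_nonneg (l : ℤ) (f : P → ℝ) : 0 ≤ W.normSqAt l f := by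
  rw [normSqAt_eq_sum]
  exact sum_nonneg fun x _ => mul_nonneg (W.m_pos x).le (sq_nonneg _)

theorem innerAt_sq_le (l : ℤ) (f g : P → ℝ) :
    W.innerAt l f g ^ 2 ≤ W.normSqAt l f * W.normSqAt l g := by
  rw [normSqAt_eq_sum, normSqAt_eq_sum]
  have hm := fun x => (W.m_pos x).le
  exact sum_sq_le_sum_mul_sum_of_sq_le_mul _ (fun x _ => mul_nonneg (hm x) (sq_nonneg _))
    (fun x _ => mul_nonneg (hm x) (sq_nonneg _)) fun x _ => le_of_eq (by ring)

theorem innerAt_Up_left (l : ℤ) (g f : P → ℝ) :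
    W.innerAt (l + 1) (W.Up g) f = W.innerAt l g (W.Down f) := by
  have hcomm := W.sum_lvl_sum_comm l 1 (F := fun x y => W.p y x * W.m y * f y * g x)
    fun x y h => W.rk_covBy x y (W.covBy_of_p_ne_zero (by aesop))
  simp only [innerAt, Up_apply, Down_apply, mul_sum, sum_mul]
  rw [sum_congr rfl fun y _ => sum_congr rfl fun x _ => ?_, ← hcomm,
    sum_congr rfl fun x _ => sum_congr rfl fun y _ => ?_]
  · field_simp [(W.m_pos x).ne']
  · ring

theorem innerAt_Down_one {l : ℤ} (hl : -1 ≤ l) (f : P → ℝ) :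
    W.innerAt l (W.Down f) 1 = W.innerAt (l + 1) f 1 := by
  rw [innerAt_comm, ← innerAt_Up_left, innerAt_comm]
  refine sum_congr rfl fun y hy => ?_
  rw [W.Up_one (by have := W.mem_lvl.1 hy; omega), Pi.one_apply]

theorem exists_lvl_neg_one_eq_singleton : ∃ b, W.lvl (-1) = {b} ∧ W.m b = 1 := by
  obtain ⟨b, hb, hunique⟩ := W.bot_unique
  refine ⟨b, ?_, W.m_bot b hb⟩
  ext x
  rw [mem_lvl, mem_singleton]
  exact ⟨hunique x, fun h => h ▸ hb⟩

theorem innerAt_one_one {l : ℤ} (hl : -1 ≤ l) (hld : l ≤ W.d) : W.innerAt l 1 1 = 1 := by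
  induction l, hl using Int.leInduction with
  | base =>
    obtain ⟨b, hlvl, hb⟩ := W.exists_lvl_neg_one_eq_singleton
    simp [innerAt, hlvl, hb]
  | succ l hl ih =>
    rw [← W.innerAt_Down_one hl, ← ih (by omega)]
    refine sum_congr rfl fun x hx => ?_
    rw [W.Down_one (by have := W.mem_lvl.1 hx; omega), Pi.one_apply]

theorem Down_sq_le {z : P} (hz : W.rk z < W.d) (f : P → ℝ) :
    W.Down f z ^ 2 ≤ W.Down (f ^ 2) z := by
  have hw : ∀ y, 0 ≤ W.p y z * W.m y / W.m z := fun y =>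
    div_nonneg (mul_nonneg (W.p_nonneg y z) (W.m_pos y).le) (W.m_pos z).le
  calc W.Down f z ^ 2 ≤ W.Down 1 z * W.Down (f ^ 2) z :=
        sum_sq_le_sum_mul_sum_of_sq_le_mul _ (fun y _ => mul_nonneg (hw y) zero_le_one)
          (fun y _ => mul_nonneg (hw y) (sq_nonneg (f y)))
          fun y _ => le_of_eq (by
            simp only [downMat, Matrix.of_apply, Pi.one_apply, Pi.pow_apply]; ring)
    _ = W.Down (f ^ 2) z := by rw [W.Down_one hz, one_mul]

theorem sum_m_mul_Down_sq {l : ℤ} (hl : -1 ≤ l) (f : P → ℝ) :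
    ∑ z ∈ W.lvl l, W.m z * W.Down (f ^ 2) z = W.normSqAt (l + 1) f := by
  have h := W.innerAt_Down_one hl (f ^ 2)
  simpa only [innerAt, normSqAt_eq_sum, Pi.one_apply, Pi.pow_apply, mul_one] using h

theorem normSqAt_Down_le {l : ℤ} (hl : -1 ≤ l) (hld : l < W.d) (f : P → ℝ) :
    W.normSqAt l (W.Down f) ≤ W.normSqAt (l + 1) f := by
  rw [← W.sum_m_mul_Down_sq hl, normSqAt_eq_sum]
  refine sum_le_sum fun z hz => mul_le_mul_of_nonneg_left (W.Down_sq_le ?_ f) (W.m_pos z).le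
  rwa [W.mem_lvl.1 hz]

end UpDown

section Links

theorem chSum_nonneg (z x : P) : 0 ≤ W.chSum z x :=
  Matrix.pow_apply_nonneg W.p_nonneg _ x z

theorem chSum_eq_p {z y : P} (h : W.rk y = W.rk z + 1) : W.chSum z y = W.p y z := by
  rw [chSum, h, add_sub_cancel_left, Int.toNat_one, pow_one, upMat, Matrix.of_apply]

theorem chSum_eq_Up {z x : P} (h : W.rk x = W.rk z + 2) :
    W.chSum z x = W.Up (fun y => W.p y z) x := by
  rw [chSum, h, add_sub_cancel_left, show (2 : ℤ).toNat = 2 from rfl, sq]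
  rfl

theorem rk_eq_add_two {z y x : P} (hzy : z ⋖ y) (hyx : y ⋖ x) : W.rk x = W.rk z + 2 := by
  have := W.rk_covBy z y hzy
  have := W.rk_covBy y x hyx
  omega

theorem chSum_pos {z y x : P} (hzy : z ⋖ y) (hyx : y ⋖ x) : 0 < W.chSum z x := by
  rw [W.chSum_eq_Up (W.rk_eq_add_two hzy hyx)]
  exact sum_pos' (fun _ _ => mul_nonneg (W.p_nonneg _ _) (W.p_nonneg _ _))
    ⟨y, mem_univ y, mul_pos ((W.p_pos_iff x y).2 hyx) ((W.p_pos_iff y z).2 hzy)⟩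

theorem exists_covBy_of_Up_p_mul_ne_zero {z x : P} {f : P → ℝ}
    (h : W.Up (fun y => W.p y z * f y) x ≠ 0) : ∃ y, z ⋖ y ∧ y ⋖ x := by
  rw [Up_apply] at h
  obtain ⟨y, -, hy⟩ := exists_ne_zero_of_sum_ne_zero h
  exact ⟨y, W.covBy_of_p_ne_zero (left_ne_zero_of_mul (right_ne_zero_of_mul hy)),
    W.covBy_of_p_ne_zero (left_ne_zero_of_mul hy)⟩

theorem upMatL_apply {z x : P} (h : W.rk x = W.rk z + 2) (y : P) :
    W.upMatL z x y = W.p x y * W.p y z / W.chSum z x := by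
  rw [upMatL, Matrix.of_apply]
  by_cases hyx : y ⋖ x
  · have hrk := W.rk_covBy y x hyx
    by_cases hzy : z ≤ y
    · rw [if_pos ⟨hyx, hzy⟩, pL, W.chSum_eq_p (by omega)]
    · rw [if_neg fun hc => hzy hc.2, W.p_eq_zero fun hc => hzy hc.le, mul_zero, zero_div]
  · rw [if_neg fun hc => hyx hc.1, W.p_eq_zero hyx, zero_mul, zero_div]

theorem UpL_apply {z x : P} (h : W.rk x = W.rk z + 2) (f : P → ℝ) :
    W.UpL z f x = W.Up (fun y => W.p y z * f y) x / W.chSum z x := by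
  rw [UpL, Matrix.mulVec, dotProduct, Up_apply, sum_div]
  exact sum_congr rfl fun y _ => by rw [W.upMatL_apply h]; ring

theorem downMatL_apply {z y : P} (hzy : z ⋖ y) (x : P) : W.downMatL z y x = W.downMat y x := by
  rw [downMatL, Matrix.of_apply, downMat, Matrix.of_apply]
  split_ifs with hyx
  · have hpyz := ((W.p_pos_iff y z).2 hzy).ne'
    have hchain := (W.chSum_pos hzy hyx).ne'
    have := (W.m_pos z).ne'
    rw [pL, mL, mL, W.chSum_eq_p (W.rk_covBy z y hzy)]
    field_simp
  · rw [W.p_eq_zero hyx, zero_mul, zero_div]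

theorem sum_subtype_covBy {z : P} {g : P → ℝ} (hg : ∀ y, g y ≠ 0 → z ⋖ y) :
    ∑ y : {y // z ⋖ y}, g y = ∑ y, g y := by
  rw [← sum_subtype (univ.filter (z ⋖ ·)) fun _ => mem_filter_univ _]
  exact sum_filter_of_ne fun y _ => hg y

theorem downMat_pos {z y : P} (hzy : z ⋖ y) : 0 < W.downMat z y :=
  div_pos (mul_pos ((W.p_pos_iff y z).2 hzy) (W.m_pos y)) (W.m_pos z)

theorem sum_subtype_covBy_downMat_mul (z : P) (f : P → ℝ) :
    ∑ y : {y // z ⋖ y}, W.downMat z y * f y = W.Down f z :=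
  sum_subtype_covBy (g := fun y => W.downMat z y * f y) fun _ hy =>
    not_imp_comm.1 W.downMat_eq_zero (left_ne_zero_of_mul hy)

theorem downMatL_mul_upMatL_apply {z y : P} (hzy : z ⋖ y) (y' : P) :
    (W.downMatL z * W.upMatL z) y y' =
      ∑ x, W.downMat y x * (W.p x y' * W.p y' z / W.chSum z x) := by
  rw [Matrix.mul_apply]
  refine sum_congr rfl fun x _ => ?_
  by_cases hyx : y ⋖ x
  · rw [W.downMatL_apply hzy, W.upMatL_apply (W.rk_eq_add_two hzy hyx)]
  · rw [W.downMatL_apply hzy, W.downMat_eq_zero hyx, zero_mul, zero_mul]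

theorem UpL_one {z y x : P} (hzy : z ⋖ y) (hyx : y ⋖ x) : W.UpL z 1 x = 1 := by
  have hrk := W.rk_eq_add_two hzy hyx
  simp only [W.UpL_apply hrk, Pi.one_apply, mul_one, ← W.chSum_eq_Up hrk]
  exact div_self (W.chSum_pos hzy hyx).ne'

theorem downMat_mul_downMatL_mul_upMatL {z y : P} (hzy : z ⋖ y) (y' : P) :
    W.downMat z y * (W.downMatL z * W.upMatL z) y y' =
      ∑ x, W.m x / W.m z * (W.p x y * W.p y z * (W.p x y' * W.p y' z) / W.chSum z x) := by
  rw [W.downMatL_mul_upMatL_apply hzy, mul_sum]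
  refine sum_congr rfl fun x _ => ?_
  have := (W.m_pos y).ne'
  simp only [downMat, Matrix.of_apply]
  field_simp

theorem downMatL_mul_upMatL_detailed_balance {z y y' : P} (hzy : z ⋖ y) (hzy' : z ⋖ y') :
    W.downMat z y * (W.downMatL z * W.upMatL z) y y' =
      W.downMat z y' * (W.downMatL z * W.upMatL z) y' y := by
  rw [W.downMat_mul_downMatL_mul_upMatL hzy, W.downMat_mul_downMatL_mul_upMatL hzy']
  exact sum_congr rfl fun x _ => by rw [mul_comm (W.p x y * W.p y z)]

theorem downMatL_mul_upMatL_nonneg {z y : P} (hzy : z ⋖ y) (y' : P) :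
    0 ≤ (W.downMatL z * W.upMatL z) y y' := by
  rw [W.downMatL_mul_upMatL_apply hzy]
  exact sum_nonneg fun x _ => mul_nonneg
    (div_nonneg (mul_nonneg (W.p_nonneg _ _) (W.m_pos _).le) (W.m_pos _).le)
    (div_nonneg (mul_nonneg (W.p_nonneg _ _) (W.p_nonneg _ _)) (W.chSum_nonneg _ _))

theorem downMatL_mul_upMatL_ne_zero {z y y' : P} (hzy : z ⋖ y)
    (h : (W.downMatL z * W.upMatL z) y y' ≠ 0) : z ⋖ y' := by
  by_contra hc
  simp [W.downMatL_mul_upMatL_apply hzy, W.p_eq_zero hc] at h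

theorem MplusEndL_apply (z : P) (f : P → ℝ) (y : {y // z ⋖ y}) :
    W.MplusEndL z (fun y => f y) y = W.Down (W.UpL z f) y := by
  have hsum : W.MplusEndL z (fun y => f y) y = (W.downMatL z * W.upMatL z).mulVec f y :=
    sum_subtype_covBy (g := fun y' => (W.downMatL z * W.upMatL z) y y' * f y')
      fun _ h => W.downMatL_mul_upMatL_ne_zero y.2 (left_ne_zero_of_mul h)
  rw [hsum, ← Matrix.mulVec_mulVec]
  exact congrArg (dotProduct · (W.UpL z f)) (funext (W.downMatL_apply y.2))

theorem linkWalk_mem_rowStochastic {z : P} (hz : W.rk z + 1 < W.d) :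
    (W.downMatL z * W.upMatL z).submatrix Subtype.val Subtype.val ∈
      Matrix.rowStochastic ℝ {y // z ⋖ y} := by
  refine ⟨fun y y' => W.downMatL_mul_upMatL_nonneg y.2 y', funext fun y => ?_⟩
  refine (W.MplusEndL_apply z 1 y).trans ?_
  rw [Pi.one_apply, ← W.Down_one (x := y) (by rwa [W.rk_covBy z y y.2])]
  exact W.Down_congr fun x => W.UpL_one y.2

theorem innerL_UpL_self (z : P) (f : P → ℝ) :
    W.innerL z 1 (W.UpL z f) (W.UpL z f) =
      ∑ x, W.m x / W.m z * (W.Up (fun y => W.p y z * f y) x ^ 2 / W.chSum z x) := by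
  rw [innerL, linkLvl, sum_congr rfl fun x hx => ?_]
  · refine sum_filter_of_ne fun x _ hx => ?_
    obtain ⟨y, hzy, hyx⟩ := W.exists_covBy_of_Up_p_mul_ne_zero (z := z) (x := x) (f := f) (by aesop)
    exact ⟨hzy.le.trans hyx.le, by rw [W.rk_eq_add_two hzy hyx]; ring⟩
  · rw [W.UpL_apply (by have := (mem_filter.1 hx).2.2; omega), mL]
    by_cases hchain : W.chSum z x = 0
    · simp [hchain]
    · field_simp

theorem innerL_UpL_self_eq_Down (z : P) (f : P → ℝ) :
    W.innerL z 1 (W.UpL z f) (W.UpL z f) = W.Down (W.Down (W.UpL z f) * f) z := by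
  have hquot : ∀ x, W.Up (fun y => W.p y z * f y) x ^ 2 / W.chSum z x =
      W.Up (fun y => W.p y z * f y) x * W.UpL z f x := by
    intro x
    by_cases hx : W.Up (fun y => W.p y z * f y) x = 0
    · rw [hx]
      simp
    · obtain ⟨y, hzy, hyx⟩ := W.exists_covBy_of_Up_p_mul_ne_zero hx
      rw [W.UpL_apply (W.rk_eq_add_two hzy hyx)]
      ring
  simp only [innerL_UpL_self, hquot]
  simp only [Up_apply, Down_apply, Pi.mul_apply, sum_mul, mul_sum]
  rw [sum_comm]
  refine sum_congr rfl fun y _ => sum_congr rfl fun x _ => ?_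
  field_simp [(W.m_pos y).ne']

theorem innerL_UpL_self_le {z : P} (hz : W.rk z + 1 < W.d) {μ : ℝ}
    (hμ : eigMultAboveLe (W.MplusEndL z) μ 1) (f : P → ℝ) :
    W.innerL z 1 (W.UpL z f) (W.UpL z f) ≤
      W.Down f z ^ 2 + μ * (W.Down (f ^ 2) z - W.Down f z ^ 2) := by
  have hmass := W.sum_subtype_covBy_downMat_mul z 1
  simp only [Pi.one_apply, mul_one, W.Down_one (x := z) (by omega)] at hmass
  have key := sum_mul_mulVec_le_of_reversible (W.linkWalk_mem_rowStochastic hz)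
    (fun y => W.downMat_pos y.2) hmass
    (fun y y' => W.downMatL_mul_upMatL_detailed_balance y.2 y'.2) hμ fun y => f y
  have hform : W.Down (W.Down (W.UpL z f) * f) z =
      ∑ y : {y // z ⋖ y}, W.downMat z y * W.MplusEndL z (fun y => f y) y * f y := by
    simp only [MplusEndL_apply, mul_assoc]
    exact (W.sum_subtype_covBy_downMat_mul z _).symm
  rw [innerL_UpL_self_eq_Down, hform, ← W.sum_subtype_covBy_downMat_mul z f,
    ← W.sum_subtype_covBy_downMat_mul z (f ^ 2)]
  exact key

theorem sum_Up_p_mul_sq_div_chSum (x : P) (f : P → ℝ) :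
    ∑ z, W.Up (fun y => W.p y z * f y) x ^ 2 / W.chSum z x =
      ∑ y, ∑ y', W.p x y * f y * (W.p x y' * f y') * ∑ z, W.p y z * W.p y' z / W.chSum z x := by
  have hsq : ∀ z, W.Up (fun y => W.p y z * f y) x ^ 2 / W.chSum z x =
      ∑ y, ∑ y', W.p x y * f y * (W.p x y' * f y') * (W.p y z * W.p y' z / W.chSum z x) := by
    intro z
    rw [Up_apply, sq, sum_mul_sum, sum_div]
    refine sum_congr rfl fun y _ => ?_
    rw [sum_div]
    exact sum_congr rfl fun y' _ => by ring
  simp only [hsq, mul_sum]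
  rw [sum_comm]
  exact sum_congr rfl fun y _ => sum_comm

end Links

section PropertyUL

/-- Property UL with constants `(cxyz l, cdia l, csqr l)`, as a single notion. -/
structure PropertyUL (cxyz cdia csqr : ℤ → ℝ) : Prop where
  ul1 : W.UL1 cxyz
  ul2 : W.UL2 cdia
  ul3 : W.UL3 csqr

variable {W} {cxyz cdia csqr : ℤ → ℝ} {l : ℤ}

theorem PropertyUL.sum_p_mul_p_div_chSum (h : W.PropertyUL cxyz cdia csqr) (hl : 0 ≤ l)
    (hld : l < W.d) {y y' x : P} (hy : W.rk y = l) (hyx : y ⋖ x) (hy'x : y' ⋖ x) :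
    ∑ z, W.p y z * W.p y' z / W.chSum z x = cdia l + if y = y' then cxyz l - cdia l else 0 := by
  have hcov : ∀ z, W.p y z * W.p y' z / W.chSum z x ≠ 0 → z ⋖ y ∧ z ⋖ y' := fun z hz =>
    ⟨W.covBy_of_p_ne_zero fun h0 => hz (by rw [h0, zero_mul, zero_div]),
      W.covBy_of_p_ne_zero fun h0 => hz (by rw [h0, mul_zero, zero_div])⟩
  split_ifs with hyy'
  · subst hyy'
    rw [add_sub_cancel, ← h.ul1 l hl hld y hy x hyx,
      ← sum_filter_of_ne fun z _ hz => (hcov z hz).1]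
    simp only [sq]
  · have hy' : W.rk y' = l := by
      have := W.rk_covBy y x hyx
      have := W.rk_covBy y' x hy'x
      omega
    rw [add_zero, ← h.ul2 l hl hld y y' hy hy' hyy' x hyx hy'x,
      sum_filter_of_ne fun z _ => hcov z]

theorem PropertyUL.sum_Up_p_mul_sq_div_chSum (h : W.PropertyUL cxyz cdia csqr) (hl : 0 ≤ l)
    (hld : l < W.d) {x : P} (hx : W.rk x = l + 1) (f : P → ℝ) :
    ∑ z, W.Up (fun y => W.p y z * f y) x ^ 2 / W.chSum z x =
      cdia l * W.Up f x ^ 2 + (cxyz l - cdia l) * ∑ y, W.p x y ^ 2 * f y ^ 2 := by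
  have hpair : ∀ y y', W.p x y * f y * (W.p x y' * f y') *
      ∑ z, W.p y z * W.p y' z / W.chSum z x = W.p x y * f y * (W.p x y' * f y') *
        (cdia l + if y = y' then cxyz l - cdia l else 0) := by
    intro y y'
    by_cases hyx : y ⋖ x
    · by_cases hy'x : y' ⋖ x
      · rw [h.sum_p_mul_p_div_chSum hl hld (by have := W.rk_covBy y x hyx; omega) hyx hy'x]
      · rw [W.p_eq_zero hy'x]
        ring
    · rw [W.p_eq_zero hyx]
      ring
  calc ∑ z, W.Up (fun y => W.p y z * f y) x ^ 2 / W.chSum z x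
      = ∑ y, ∑ y', W.p x y * f y * (W.p x y' * f y') *
          (cdia l + if y = y' then cxyz l - cdia l else 0) := by
        simp only [W.sum_Up_p_mul_sq_div_chSum x f, hpair]
    _ = cdia l * (∑ y, W.p x y * f y) ^ 2 +
          (cxyz l - cdia l) * ∑ y, W.p x y * f y * (W.p x y * f y) := by
        simp only [mul_add, sum_add_distrib, mul_ite, mul_zero, sum_ite_eq, mem_univ, if_true,
          ← sum_mul, ← sum_mul_sum, mul_comm (_ - _), mul_comm (cdia l), sq]
    _ = cdia l * W.Up f x ^ 2 + (cxyz l - cdia l) * ∑ y, W.p x y ^ 2 * f y ^ 2 := by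
        simp only [Up_apply, sq, mul_mul_mul_comm]

theorem PropertyUL.sub_mul_sum_p_sq (h : W.PropertyUL cxyz cdia csqr) (hl : 0 ≤ l)
    (hld : l < W.d) {x : P} (hx : W.rk x = l + 1) :
    (cxyz l - cdia l) * ∑ y, W.p x y ^ 2 = 1 - cdia l := by
  have hchain : ∀ z, W.Up (fun y => W.p y z) x ^ 2 / W.chSum z x = W.Up (fun y => W.p y z) x := by
    intro z
    by_cases hz : W.rk x = W.rk z + 2
    · rw [← W.chSum_eq_Up hz, sq, mul_self_div_self]
    · have hzero : W.Up (fun y => W.p y z) x = 0 := by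
        by_contra hne
        obtain ⟨y, hzy, hyx⟩ := W.exists_covBy_of_Up_p_mul_ne_zero (f := 1)
          (by simpa only [Pi.one_apply, mul_one] using hne)
        exact hz (W.rk_eq_add_two hzy hyx)
      rw [hzero, sq, zero_mul, zero_div]
  have htotal : ∑ z, W.Up (fun y => W.p y z) x = 1 := by
    simp only [Up_apply]
    rw [sum_comm, ← W.Up_one (y := x) (by omega), Up_apply]
    refine sum_congr rfl fun y _ => ?_
    by_cases hyx : y ⋖ x
    · have hrow := W.Up_one (y := y) (by have := W.rk_covBy y x hyx; omega)
      simp only [Up_apply, Pi.one_apply, mul_one] at hrow ⊢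
      rw [← mul_sum, hrow, mul_one]
    · simp only [W.p_eq_zero hyx, zero_mul, sum_const_zero]
  have key := h.sum_Up_p_mul_sq_div_chSum hl hld hx 1
  simp only [Pi.one_apply, mul_one, one_pow, hchain, htotal, W.Up_one (y := x) (by omega)] at key
  linarith

theorem PropertyUL.sum_m_mul_sum_p_sq (h : W.PropertyUL cxyz cdia csqr) (hl : 0 ≤ l)
    (hld : l < W.d) (f : P → ℝ) :
    ∑ x ∈ W.lvl (l + 1), W.m x * ∑ y, W.p x y ^ 2 * f y ^ 2 = csqr l * W.normSqAt l f := by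
  simp only [mul_sum]
  rw [← W.sum_lvl_sum_comm l 1 (F := fun y x => W.m x * (W.p x y ^ 2 * f y ^ 2))
    fun y x hne => W.rk_covBy y x (W.covBy_of_p_ne_zero (by aesop)), normSqAt_eq_sum, mul_sum]
  refine sum_congr rfl fun y hy => ?_
  have hcov : ∀ x ∈ univ, W.m x * W.p x y ^ 2 ≠ 0 → y ⋖ x := fun x _ hne =>
    W.covBy_of_p_ne_zero (by aesop)
  rw [← mul_assoc, ← h.ul3 l hl hld y (W.mem_lvl.1 hy), sum_filter_of_ne hcov, sum_mul]
  exact sum_congr rfl fun x _ => by ring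

theorem PropertyUL.sub_mul_csqr (h : W.PropertyUL cxyz cdia csqr) (hl : 0 ≤ l) (hld : l < W.d) :
    (cxyz l - cdia l) * csqr l = 1 - cdia l := by
  have hmass : ∀ i, -1 ≤ i → i ≤ W.d → ∑ x ∈ W.lvl i, W.m x = 1 := fun i hi hid => by
    simpa only [innerAt, Pi.one_apply, mul_one] using W.innerAt_one_one hi hid
  have hsum := h.sum_m_mul_sum_p_sq hl hld 1
  simp only [normSqAt_eq_sum, Pi.one_apply, one_pow, mul_one, hmass l (by omega) hld.le] at hsum
  calc (cxyz l - cdia l) * csqr l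
      = ∑ x ∈ W.lvl (l + 1), W.m x * ((cxyz l - cdia l) * ∑ y, W.p x y ^ 2) := by
        rw [← hsum, mul_sum]
        exact sum_congr rfl fun x _ => by ring
    _ = ∑ x ∈ W.lvl (l + 1), W.m x * (1 - cdia l) :=
        sum_congr rfl fun x hx => by rw [h.sub_mul_sum_p_sq hl hld (W.mem_lvl.1 hx)]
    _ = 1 - cdia l := by rw [← sum_mul, hmass (l + 1) (by omega) (by omega), one_mul]

theorem PropertyUL.sum_m_mul_innerL_UpL (h : W.PropertyUL cxyz cdia csqr) (hl : 0 ≤ l)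
    (hld : l < W.d) (f : P → ℝ) :
    ∑ z ∈ W.lvl (l - 1), W.m z * W.innerL z 1 (W.UpL z f) (W.UpL z f) =
      cdia l * W.normSqAt (l + 1) (W.Up f) + (1 - cdia l) * W.normSqAt l f := by
  have hlocal : ∀ z, W.m z * W.innerL z 1 (W.UpL z f) (W.UpL z f) =
      ∑ x, W.m x * (W.Up (fun y => W.p y z * f y) x ^ 2 / W.chSum z x) := fun z => by
    rw [innerL_UpL_self, mul_sum]
    refine sum_congr rfl fun x _ => ?_
    rw [← mul_assoc, mul_div_cancel₀ _ (W.m_pos z).ne']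
  have hrk : ∀ z x, W.m x * (W.Up (fun y => W.p y z * f y) x ^ 2 / W.chSum z x) ≠ 0 →
      W.rk x = W.rk z + 2 := fun z x hne => by
    obtain ⟨y, hzy, hyx⟩ := W.exists_covBy_of_Up_p_mul_ne_zero (z := z) (x := x) (f := f) (by aesop)
    exact W.rk_eq_add_two hzy hyx
  rw [sum_congr rfl fun z _ => hlocal z, W.sum_lvl_sum_comm _ 2 hrk, show l - 1 + 2 = l + 1 by ring,
    ← h.sub_mul_csqr hl hld, mul_assoc, ← h.sum_m_mul_sum_p_sq hl hld, normSqAt_eq_sum, mul_sum,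
    mul_sum, ← sum_add_distrib]
  refine sum_congr rfl fun x hx => ?_
  rw [← mul_sum, h.sum_Up_p_mul_sq_div_chSum hl hld (W.mem_lvl.1 hx)]
  ring

theorem PropertyUL.normSqAt_Up_add_normSqAt_le (h : W.PropertyUL cxyz cdia csqr) (hl : 0 ≤ l)
    (hld : l < W.d) {μ : ℝ}
    (hμ : ∀ z, W.rk z = l - 1 → eigMultAboveLe (W.MplusEndL z) μ 1) (f : P → ℝ) :
    cdia l * W.normSqAt (l + 1) (W.Up f) + (1 - cdia l) * W.normSqAt l f ≤
      W.normSqAt (l - 1) (W.Down f) +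
        μ * (W.normSqAt l f - W.normSqAt (l - 1) (W.Down f)) := by
  have hDown := W.sum_m_mul_Down_sq (l := l - 1) (by omega) f
  rw [sub_add_cancel] at hDown
  calc _ = ∑ z ∈ W.lvl (l - 1), W.m z * W.innerL z 1 (W.UpL z f) (W.UpL z f) :=
        (h.sum_m_mul_innerL_UpL hl hld f).symm
    _ ≤ ∑ z ∈ W.lvl (l - 1),
          W.m z * (W.Down f z ^ 2 + μ * (W.Down (f ^ 2) z - W.Down f z ^ 2)) := by
        refine sum_le_sum fun z hz => mul_le_mul_of_nonneg_left ?_ (W.m_pos z).le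
        have hrk := W.mem_lvl.1 hz
        exact W.innerL_UpL_self_le (by omega) (hμ z hrk) f
    _ = _ := by
        rw [← hDown, normSqAt_eq_sum, ← sum_sub_distrib, mul_sum, ← sum_add_distrib]
        exact sum_congr rfl fun z _ => by ring

theorem PropertyUL.normSqAt_Up_le (h : W.PropertyUL cxyz cdia csqr) (hl : 0 ≤ l) (hld : l < W.d)
    (hdia : 0 < cdia l) {μ : ℝ}
    (hμ : ∀ z, W.rk z = l - 1 → eigMultAboveLe (W.MplusEndL z) μ 1) (a : ℝ) (f : P → ℝ) :
    W.normSqAt (l + 1) (W.Up f) ≤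
      (1 - (1 - a) / cdia l + 1 / cdia l * max (μ - a) 0) * W.normSqAt l f +
        (1 - a) / cdia l * W.normSqAt (l - 1) (W.Down f) := by
  have hlocal := h.normSqAt_Up_add_normSqAt_le hl hld hμ f
  have hDown_nonneg := W.normSqAt_nonneg (l - 1) (W.Down f)
  have hDown_le := W.normSqAt_Down_le (l := l - 1) (by omega) (by omega) f
  rw [sub_add_cancel] at hDown_le
  have hgap : (μ - a) * (W.normSqAt l f - W.normSqAt (l - 1) (W.Down f)) ≤
      max (μ - a) 0 * W.normSqAt l f :=
    calc _ ≤ max (μ - a) 0 * (W.normSqAt l f - W.normSqAt (l - 1) (W.Down f)) := by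
          gcongr
          exact le_max_left _ _
      _ ≤ _ := by gcongr; exact sub_le_self _ hDown_nonneg
  refine le_of_mul_le_mul_left ?_ hdia
  have hexpand : cdia l * ((1 - (1 - a) / cdia l + 1 / cdia l * max (μ - a) 0) * W.normSqAt l f +
      (1 - a) / cdia l * W.normSqAt (l - 1) (W.Down f)) =
      (cdia l - (1 - a) + max (μ - a) 0) * W.normSqAt l f +
        (1 - a) * W.normSqAt (l - 1) (W.Down f) := by
    field_simp
  rw [hexpand]
  linarith

end PropertyUL

section Descent

/-- The coefficient `a_{l,r} = 1 - ∏_{r ≤ t ≤ l} (1 - α_t) / c^dia_t`. -/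
def coeffA (α cdia : ℤ → ℝ) (l r : ℤ) : ℝ := 1 - ∏ t ∈ Icc r l, (1 - α t) / cdia t

/-- The coefficient `b_{l,r} = (1 / c^dia_r) * ∏_{r < t ≤ l} (1 - α_t) / c^dia_t`. -/
def coeffB (α cdia : ℤ → ℝ) (l r : ℤ) : ℝ := 1 / cdia r * ∏ t ∈ Icc (r + 1) l, (1 - α t) / cdia t

/-- The factor `a_{k,j} + ∑_{j ≤ i ≤ k} b_{k,i} * max {μ'_{i-1} - α_i, 0}` of `‖h_j‖²` in the bound
on `‖U_k f‖²`. -/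
def coeff (α cdia mu' : ℤ → ℝ) (k j : ℤ) : ℝ :=
  coeffA α cdia k j + ∑ i ∈ Icc j k, coeffB α cdia k i * max (mu' (i - 1) - α i) 0

variable {α cdia mu' : ℤ → ℝ}

theorem coeffB_self (k : ℤ) : coeffB α cdia k k = 1 / cdia k := by
  rw [coeffB, Icc_eq_empty (by omega), prod_empty, mul_one]

theorem coeff_self (k : ℤ) : coeff α cdia mu' k k =
    1 - (1 - α k) / cdia k + 1 / cdia k * max (mu' (k - 1) - α k) 0 := by
  rw [coeff, coeffA, Icc_self, prod_singleton, sum_singleton, coeffB_self]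

theorem coeffB_succ {j k : ℤ} (h : j ≤ k) : coeffB α cdia (k + 1) j =
    (1 - α (k + 1)) / cdia (k + 1) * coeffB α cdia k j := by
  rw [coeffB, ← insert_Icc_right_eq_Icc_add_one (by omega),
    prod_insert (by simp only [mem_Icc]; omega), coeffB]
  ring

theorem coeff_succ {j k : ℤ} (h : j ≤ k) : coeff α cdia mu' (k + 1) j =
    coeff α cdia mu' (k + 1) (k + 1) + (1 - α (k + 1)) / cdia (k + 1) * coeff α cdia mu' k j := by
  have hnotMem : k + 1 ∉ Icc j k := by simp only [mem_Icc]; omega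
  have hsum : ∑ i ∈ Icc j k, coeffB α cdia (k + 1) i * max (mu' (i - 1) - α i) 0 =
      (1 - α (k + 1)) / cdia (k + 1) *
        ∑ i ∈ Icc j k, coeffB α cdia k i * max (mu' (i - 1) - α i) 0 := by
    rw [mul_sum]
    exact sum_congr rfl fun i hi => by rw [coeffB_succ (mem_Icc.1 hi).2, mul_assoc]
  rw [coeff_self, coeff, coeffA, coeff, coeffA, ← insert_Icc_right_eq_Icc_add_one (by omega),
    prod_insert hnotMem, sum_insert hnotMem, hsum, coeffB_self]
  ring

theorem coeff_le {k : ℤ} (hk : 0 ≤ k) (hdia : ∀ t, 0 ≤ t → t ≤ k → 0 < cdia t)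
    (hα : ∀ t, 0 ≤ t → t ≤ k → α t ≤ 1) {j : ℤ} (hj : j ∈ Icc 0 k) :
    coeff α cdia mu' k j ≤
      (Icc 0 k).sup' (nonempty_Icc.2 hk) (coeffA α cdia k) +
        ∑ i ∈ Icc 0 k, coeffB α cdia k i * max (mu' (i - 1) - α i) 0 := by
  have hB : ∀ i ∈ Icc 0 k, 0 ≤ coeffB α cdia k i := fun i hi => by
    rw [mem_Icc] at hi
    refine mul_nonneg (one_div_pos.2 (hdia i hi.1 hi.2)).le (prod_nonneg fun t ht => ?_)
    rw [mem_Icc] at ht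
    exact div_nonneg (sub_nonneg.2 (hα t (by omega) ht.2)) (hdia t (by omega) ht.2).le
  exact add_le_add (le_sup' (coeffA α cdia k) hj) <|
    sum_le_sum_of_subset_of_nonneg (Icc_subset_Icc_left (mem_Icc.1 hj).1) fun i hi _ =>
      mul_nonneg (hB i hi) (le_max_right _ _)

theorem normSqAt_Down_eq_zero {f : P → ℝ} (hf : W.innerAt 0 f 1 = 0) :
    W.normSqAt (-1) (W.Down f) = 0 := by
  obtain ⟨b, hlvl, hb⟩ := W.exists_lvl_neg_one_eq_singleton
  have hDown := W.innerAt_Down_one le_rfl f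
  rw [neg_add_cancel, hf, innerAt, hlvl, sum_singleton, hb, one_mul, Pi.one_apply, mul_one] at hDown
  rw [normSqAt_eq_sum, hlvl, sum_singleton, hDown, sq, mul_zero, mul_zero]

-- For `g = c • D f` the last bound is Cauchy–Schwarz applied to `‖D f‖² = ⟨U (D f), f⟩`.
theorem exists_normSqAt_Down_le_normSqAt_Up {l : ℤ} (hl : -1 ≤ l) {f : P → ℝ}
    (hf : W.innerAt (l + 1) f 1 = 0) (hDf : W.normSqAt l (W.Down f) ≠ 0) :
    ∃ g, W.innerAt l g 1 = 0 ∧ W.normSqAt l g = W.normSqAt (l + 1) f ∧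
      W.normSqAt l (W.Down f) ≤ W.normSqAt (l + 1) (W.Up g) := by
  have hpos : 0 < W.normSqAt l (W.Down f) := (W.normSqAt_nonneg _ _).lt_of_ne' hDf
  set c := √(W.normSqAt (l + 1) f / W.normSqAt l (W.Down f))
  have hc : c ^ 2 = W.normSqAt (l + 1) f / W.normSqAt l (W.Down f) :=
    Real.sq_sqrt (div_nonneg (W.normSqAt_nonneg _ _) hpos.le)
  refine ⟨c • W.Down f, ?_, ?_, ?_⟩
  · rw [innerAt_smul_left, W.innerAt_Down_one hl, hf, mul_zero]
  · rw [normSqAt_smul, hc, div_mul_cancel₀ _ hDf]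
  · have hcs := W.innerAt_sq_le (l + 1) (W.Up (W.Down f)) f
    rw [innerAt_Up_left] at hcs
    rw [Up_smul, normSqAt_smul, hc, div_mul_eq_mul_div, le_div_iff₀ hpos, ← sq]
    exact hcs.trans_eq (mul_comm _ _)

theorem PropertyUL.exists_normSqAt_Up_le {W : WGP P} {cxyz csqr : ℤ → ℝ}
    (h : W.PropertyUL cxyz cdia csqr) {k : ℤ} (hk : 0 ≤ k) (hkd : k < W.d)
    (hdia : ∀ t, 0 ≤ t → t ≤ k → 0 < cdia t) (hα : ∀ t, 0 ≤ t → t ≤ k → α t ≤ 1)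
    (hμ : ∀ x, W.rk x ≤ k - 1 → eigMultAboveLe (W.MplusEndL x) (mu' (W.rk x)) 1)
    {f : P → ℝ} (hf : W.innerAt k f 1 = 0) :
    ∃ j ∈ Icc 0 k, ∃ g, W.innerAt j g 1 = 0 ∧ W.normSqAt j g = W.normSqAt k f ∧
      W.normSqAt (k + 1) (W.Up f) ≤ coeff α cdia mu' k j * W.normSqAt k f := by
  have hstep : ∀ l, 0 ≤ l → l ≤ k → ∀ f, W.normSqAt (l + 1) (W.Up f) ≤
      coeff α cdia mu' l l * W.normSqAt l f +
        (1 - α l) / cdia l * W.normSqAt (l - 1) (W.Down f) := fun l hl hlk f => by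
    rw [coeff_self]
    exact h.normSqAt_Up_le hl (by omega) (hdia l hl hlk)
      (fun z hz => hz ▸ hμ z (by omega)) (α l) f
  clear hμ
  induction k, hk using Int.leInduction generalizing f with
  | base =>
    refine ⟨0, by simp, f, hf, rfl, ?_⟩
    simpa [W.normSqAt_Down_eq_zero hf] using hstep 0 le_rfl le_rfl f
  | succ k hk ih =>
    have hUp := hstep (k + 1) (by omega) le_rfl f
    rw [add_sub_cancel_right] at hUp
    by_cases hDf : W.normSqAt k (W.Down f) = 0
    · rw [hDf, mul_zero, add_zero] at hUp
      exact ⟨k + 1, by simp only [mem_Icc]; omega, f, hf, rfl, hUp⟩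
    obtain ⟨g, hg, hgf, hDg⟩ := W.exists_normSqAt_Down_le_normSqAt_Up (by omega) hf hDf
    obtain ⟨j, hj, e, he, heg, hUg⟩ := ih (by omega) (fun t ht htk => hdia t ht (by omega))
      (fun t ht htk => hα t ht (by omega)) hg fun l hl hlk => hstep l hl (by omega)
    rw [mem_Icc] at hj
    refine ⟨j, by simp only [mem_Icc]; omega, e, he, heg.trans hgf, hUp.trans ?_⟩
    have hratio : 0 ≤ (1 - α (k + 1)) / cdia (k + 1) :=
      div_nonneg (sub_nonneg.2 (hα _ (by omega) le_rfl)) (hdia _ (by omega) le_rfl).le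
    rw [coeff_succ hj.2, add_mul, mul_assoc, ← hgf]
    gcongr
    exact hDg.trans hUg

theorem sum_mul_normSqAt_single {s : Finset ℤ} {j : ℤ} (hj : j ∈ s) (c : ℤ → ℝ) (g : P → ℝ) :
    ∑ i ∈ s, c i * W.normSqAt i ((Pi.single j g : ℤ → P → ℝ) i) = c j * W.normSqAt j g := by
  rw [sum_eq_single_of_mem j hj fun i _ hij => ?_, Pi.single_eq_same]
  rw [Pi.single_eq_of_ne hij, normSqAt_eq_sum]
  simp

end Descent

end WGP

/-- norm decomposition and upper bound for `‖U_k f‖²` under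
Property UL, in terms of the second eigenvalues of the link walks. -/
theorem stmt9 {P : Type} [Fintype P] [PartialOrder P] (W : WGP P)
    (cxyz cdia csqr : ℤ → ℝ)
    (h1 : W.UL1 cxyz) (h2 : W.UL2 cdia) (h3 : W.UL3 csqr)
    (hdia : ∀ j : ℤ, 0 ≤ j → j ≤ W.d - 1 → 0 < cdia j)
    (α : ℤ → ℝ) (hα : ∀ j : ℤ, 0 ≤ j → j ≤ W.d - 1 → α j ≤ 1)
    (k : ℤ) (hk0 : 0 ≤ k) (hkd : k ≤ W.d - 1)
    (muF : P → ℝ) (mu' : ℤ → ℝ)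
    (hmuF : ∀ x : P, -1 ≤ W.rk x → W.rk x ≤ k - 1 →
      IsSecondLargestEig (W.MplusEndL x) (muF x))
    (hmu' : ∀ i : ℤ, -1 ≤ i → i ≤ k - 1 →
      (∀ x : P, W.rk x = i → muF x ≤ mu' i) ∧ ∃ x : P, W.rk x = i ∧ muF x = mu' i)
    (f : P → ℝ) (hf : W.innerAt k f (fun _ => 1) = 0) :
    (∃ h : ℤ → P → ℝ,
      (∀ j : ℤ, 0 ≤ j → j ≤ k → W.innerAt j (h j) (fun _ => 1) = 0) ∧
      W.normSqAt k f = ∑ j ∈ Finset.Icc 0 k, W.normSqAt j (h j) ∧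
      W.normSqAt (k + 1) (W.Up f)
        ≤ ∑ j ∈ Finset.Icc 0 k,
            ((1 - ∏ t ∈ Finset.Icc j k, (1 - α t) / cdia t)
              + ∑ i ∈ Finset.Icc j k,
                  ((1 / cdia i) * ∏ t ∈ Finset.Icc (i + 1) k, (1 - α t) / cdia t) *
                    max (mu' (i - 1) - α i) 0) * W.normSqAt j (h j)) ∧
    W.normSqAt (k + 1) (W.Up f)
      ≤ ((Finset.Icc (0 : ℤ) k).sup' (Finset.nonempty_Icc.mpr hk0)
            (fun j => 1 - ∏ t ∈ Finset.Icc j k, (1 - α t) / cdia t)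
          + ∑ i ∈ Finset.Icc (0 : ℤ) k,
              ((1 / cdia i) * ∏ t ∈ Finset.Icc (i + 1) k, (1 - α t) / cdia t) *
                max (mu' (i - 1) - α i) 0) * W.normSqAt k f := by
  have hUL : W.PropertyUL cxyz cdia csqr := ⟨h1, h2, h3⟩
  have hdia' : ∀ t, 0 ≤ t → t ≤ k → 0 < cdia t := fun t ht htk => hdia t ht (by omega)
  have hα' : ∀ t, 0 ≤ t → t ≤ k → α t ≤ 1 := fun t ht htk => hα t ht (by omega)
  have hμ : ∀ x, W.rk x ≤ k - 1 → eigMultAboveLe (W.MplusEndL x) (mu' (W.rk x)) 1 := fun x hx =>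
    (hmuF x (W.rk_lb x) hx).2.1.mono ((hmu' _ (W.rk_lb x) hx).1 x rfl)
  obtain ⟨j, hj, g, hg, hgf, hUf⟩ :=
    hUL.exists_normSqAt_Up_le hk0 (by omega) hdia' hα' hμ hf
  refine ⟨⟨Pi.single j g, fun i _ _ => ?_, ?_, ?_⟩, ?_⟩
  · rcases eq_or_ne i j with rfl | hij
    · rwa [Pi.single_eq_same]
    · simp [Pi.single_eq_of_ne hij, WGP.innerAt]
  · simpa [hgf] using (W.sum_mul_normSqAt_single hj 1 g).symm
  · exact hUf.trans_eq (by rw [← hgf]; exact (W.sum_mul_normSqAt_single hj _ g).symm)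
  · exact hUf.trans (mul_le_mul_of_nonneg_right (WGP.coeff_le hk0 hdia' hα' hj)
      (W.normSqAt_nonneg k f))
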